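/- arXiv:2204.12878 — 2 statements merged into one kernel-verified Lean document; each statement's English description precedes it below -/
import Mathlib

section
/- Let x ∈ C⁴(I;ℝ²) with c₀ ≤ |x_ρ| ≤ C₀, τ = x_ρ/|x_ρ|, and τ_j = δx_j/|δx_j| the discrete tangents on the uniform grid ρ_j = jh. Then τ_j + τ_{j+1} = 2τ(ρ_j) + O(h²): there exists C such that |τ_j + τ_{j+1} − 2τ(ρ_j)| ≤ C h² for all j and small h. -/
open scoped RealInnerProductSpace
open Set

noncomputable section

abbrev E2 := EuclideanSpace ℝ (Fin 2)

/-- Clockwise rotation through π/2. -/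
def rot (v : E2) : E2 := (WithLp.equiv 2 (Fin 2 → ℝ)).symm ![v 1, -v 0]

lemma norm_inv_norm_smul_sub_le {E : Type*} [NormedAddCommGroup E] [NormedSpace ℝ E]
    (m p : E) (hp : p ≠ 0) :
    ‖‖m‖⁻¹ • m - ‖p‖⁻¹ • p‖ ≤ 2 * ‖m - p‖ / ‖p‖ := by
  have hp' : 0 < ‖p‖ := norm_pos_iff.mpr hp
  rcases eq_or_ne m 0 with rfl | hm
  · simp [norm_smul, hp'.ne']
  have hm' : 0 < ‖m‖ := norm_pos_iff.mpr hm
  have hsplit : ‖m‖⁻¹ • m - ‖p‖⁻¹ • p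
      = ‖p‖⁻¹ • (m - p) + (‖m‖⁻¹ - ‖p‖⁻¹) • m := by module
  have h2 : ‖(‖m‖⁻¹ - ‖p‖⁻¹) • m‖ = |‖p‖ - ‖m‖| / ‖p‖ := by
    rw [norm_smul, Real.norm_eq_abs, ← abs_of_pos hm', ← abs_mul, abs_of_pos hm',
      ← abs_of_pos hp', ← abs_div, abs_of_pos hp']
    congr 1
    field_simp
  have h3 : |‖p‖ - ‖m‖| ≤ ‖m - p‖ := by
    rw [norm_sub_rev]; exact abs_norm_sub_norm_le p m
  rw [hsplit]
  refine (norm_add_le _ _).trans ?_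
  rw [h2, norm_smul, norm_inv, norm_norm, ← div_eq_inv_mul, ← add_div]
  gcongr
  linarith

/-- Bound on the weight of the midpoint in the second difference of `v ↦ v / ‖v‖`. -/
lemma abs_inv_norm_add_inv_norm_sub_mul_norm_le {E : Type*} [NormedAddCommGroup E]
    [InnerProductSpace ℝ E] (m d : E) (hA : m + d ≠ 0) (hB : m - d ≠ 0) :
    |‖m + d‖⁻¹ + ‖m - d‖⁻¹ - 2 * ‖m‖⁻¹| * ‖m‖ ≤ 2 * ‖d‖ ^ 2 / (‖m + d‖ * ‖m - d‖) := by
  have ha : 0 < ‖m + d‖ := norm_pos_iff.mpr hA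
  have hb : 0 < ‖m - d‖ := norm_pos_iff.mpr hB
  rcases eq_or_ne m 0 with rfl | hm
  · simp only [norm_zero, mul_zero]; positivity
  have hn : 0 < ‖m‖ := norm_pos_iff.mpr hm
  have hpar := parallelogram_law_with_norm ℝ m d
  have htri : 2 * ‖m‖ ≤ ‖m + d‖ + ‖m - d‖ := by
    have h := norm_add_le (m + d) (m - d)
    rwa [show m + d + (m - d) = (2 : ℝ) • m by module, norm_smul, Real.norm_two] at h
  have hdiff : |‖m + d‖ - ‖m - d‖| ≤ 2 * ‖d‖ := by
    have h := abs_norm_sub_norm_le (m + d) (m - d)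
    rwa [show m + d - (m - d) = (2 : ℝ) • d by module, norm_smul, Real.norm_two] at h
  have hd := norm_nonneg d
  generalize ‖m + d‖ = a at *
  generalize ‖m - d‖ = b at *
  generalize ‖m‖ = n at *
  generalize ‖d‖ = e at *
  have hsq : (a - b) ^ 2 ≤ (2 * e) ^ 2 := sq_le_sq' (by linarith [(abs_le.mp hdiff).1])
    (abs_le.mp hdiff).2
  have heq : |a⁻¹ + b⁻¹ - 2 * n⁻¹| * n = |n * (a + b) - 2 * (a * b)| / (a * b) := by
    rw [show a⁻¹ + b⁻¹ - 2 * n⁻¹ = (n * (a + b) - 2 * (a * b)) / (a * b) / n by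
      field_simp; ring, abs_div _ n, abs_div, abs_of_pos hn, abs_of_pos (mul_pos ha hb),
      div_mul_cancel₀ _ hn.ne']
  rw [heq]
  gcongr
  have h1 : (a + b - 2 * n) * (a + b) ≤ 4 * e ^ 2 := by
    nlinarith [sq_nonneg (a - b), mul_nonneg (sub_nonneg.mpr htri) hn.le]
  rw [abs_le]
  constructor
  · nlinarith [sq_nonneg (a - b)]
  · nlinarith [mul_nonneg (sub_nonneg.mpr htri) (add_pos ha hb).le]

lemma norm_second_difference_inv_norm_smul_le {E : Type*} [NormedAddCommGroup E]
    [InnerProductSpace ℝ E] (m d : E) (hA : m + d ≠ 0) (hB : m - d ≠ 0) :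
    ‖‖m + d‖⁻¹ • (m + d) + ‖m - d‖⁻¹ • (m - d) - (2 : ℝ) • (‖m‖⁻¹ • m)‖
      ≤ 4 * ‖d‖ ^ 2 / (‖m + d‖ * ‖m - d‖) := by
  have ha : 0 < ‖m + d‖ := norm_pos_iff.mpr hA
  have hb : 0 < ‖m - d‖ := norm_pos_iff.mpr hB
  have hsplit : ‖m + d‖⁻¹ • (m + d) + ‖m - d‖⁻¹ • (m - d) - (2 : ℝ) • (‖m‖⁻¹ • m)
      = (‖m + d‖⁻¹ + ‖m - d‖⁻¹ - 2 * ‖m‖⁻¹) • m + (‖m + d‖⁻¹ - ‖m - d‖⁻¹) • d := by module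
  have hdiff : |‖m - d‖ - ‖m + d‖| ≤ 2 * ‖d‖ := by
    have h := abs_norm_sub_norm_le (m - d) (m + d)
    rwa [show m - d - (m + d) = (-2 : ℝ) • d by module, norm_smul, norm_neg,
      Real.norm_two] at h
  have h2 : |‖m + d‖⁻¹ - ‖m - d‖⁻¹| * ‖d‖ ≤ 2 * ‖d‖ ^ 2 / (‖m + d‖ * ‖m - d‖) := by
    rw [inv_sub_inv ha.ne' hb.ne', abs_div, abs_of_pos (mul_pos ha hb), div_mul_eq_mul_div]
    rw [sq, ← mul_assoc]
    gcongr
  rw [hsplit]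
  refine (norm_add_le _ _).trans ?_
  rw [norm_smul, norm_smul, Real.norm_eq_abs, Real.norm_eq_abs]
  refine (add_le_add (abs_inv_norm_add_inv_norm_sub_mul_norm_le m d hA hB) h2).trans_eq ?_
  ring

lemma norm_normalize_add_normalize_sub_le {E : Type*} [NormedAddCommGroup E]
    [InnerProductSpace ℝ E] (a b p : E) (ha : a ≠ 0) (hb : b ≠ 0) (hp : p ≠ 0) :
    ‖‖a‖⁻¹ • a + ‖b‖⁻¹ • b - (2 : ℝ) • (‖p‖⁻¹ • p)‖
      ≤ ‖a - b‖ ^ 2 / (‖a‖ * ‖b‖) + 2 * ‖a + b - (2 : ℝ) • p‖ / ‖p‖ := by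
  set m : E := (2⁻¹ : ℝ) • (a + b) with hm
  set d : E := (2⁻¹ : ℝ) • (a - b) with hd
  have hmd : m + d = a := by rw [hm, hd]; module
  have hmd' : m - d = b := by rw [hm, hd]; module
  have h1 := norm_second_difference_inv_norm_smul_le m d (hmd ▸ ha) (hmd' ▸ hb)
  have h2 := norm_inv_norm_smul_sub_le m p hp
  have hnd : ‖a - b‖ = 2 * ‖d‖ := by
    rw [← Real.norm_two, ← norm_smul, hd, smul_inv_smul₀ two_ne_zero]
  have hnm : ‖a + b - (2 : ℝ) • p‖ = 2 * ‖m - p‖ := by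
    rw [show a + b - (2 : ℝ) • p = (2 : ℝ) • (m - p) by rw [hm]; module, norm_smul,
      Real.norm_two]
  rw [hmd, hmd'] at h1
  have hsplit : ‖a‖⁻¹ • a + ‖b‖⁻¹ • b - (2 : ℝ) • (‖p‖⁻¹ • p)
      = (‖a‖⁻¹ • a + ‖b‖⁻¹ • b - (2 : ℝ) • (‖m‖⁻¹ • m))
        + (2 : ℝ) • (‖m‖⁻¹ • m - ‖p‖⁻¹ • p) := by module
  rw [hsplit, hnd, hnm]
  refine (norm_add_le _ _).trans ?_
  rw [norm_smul (2 : ℝ), Real.norm_two]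
  refine (add_le_add h1 (mul_le_mul_of_nonneg_left h2 zero_le_two)).trans_eq ?_
  ring

/-- First-order Taylor estimate for a function with bounded second derivative. -/
lemma norm_sub_sub_smul_deriv_le {E : Type*} [NormedAddCommGroup E] [NormedSpace ℝ E]
    {f : ℝ → E} (hf : Differentiable ℝ f) (hf' : Differentiable ℝ (deriv f)) {K : ℝ}
    (hK : ∀ s, ‖deriv (deriv f) s‖ ≤ K) (s t : ℝ) :
    ‖f (s + t) - f s - t • deriv f s‖ ≤ K * t ^ 2 := by
  have hK0 : 0 ≤ K := (norm_nonneg _).trans (hK 0)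
  have hlip : ∀ r, ‖deriv f (s + r) - deriv f s‖ ≤ K * |r| := fun r => by
    simpa using convex_univ.norm_image_sub_le_of_norm_deriv_le
      (fun y _ => hf' y) (fun y _ => hK y) (mem_univ s) (mem_univ (s + r))
  have hg : ∀ r, HasDerivAt (fun r => f (s + r) - r • deriv f s)
      (deriv f (s + r) - deriv f s) r := fun r => by
    simpa [Pi.sub_def] using ((hf (s + r)).hasDerivAt.comp_const_add s r).sub
      ((hasDerivAt_id r).smul_const (deriv f s))
  have hbound := (convex_uIcc (0 : ℝ) t).norm_image_sub_le_of_norm_hasDerivWithin_le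
    (C := K * |t|) (fun r _ => (hg r).hasDerivWithinAt)
    (fun r hr => (hlip r).trans (mul_le_mul_of_nonneg_left
      (by simpa using abs_sub_left_of_mem_uIcc hr) hK0))
    left_mem_uIcc right_mem_uIcc
  calc ‖f (s + t) - f s - t • deriv f s‖
      = ‖f (s + t) - t • deriv f s - (f (s + 0) - (0 : ℝ) • deriv f s)‖ := by
        congr 1; rw [add_zero]; module
    _ ≤ K * |t| * ‖t - 0‖ := hbound
    _ = K * t ^ 2 := by rw [sub_zero, Real.norm_eq_abs, mul_assoc, abs_mul_abs_self, sq]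

/-- Second-order consistency of the central difference. -/
lemma norm_central_difference_sub_le {E : Type*} [NormedAddCommGroup E] [NormedSpace ℝ E]
    {f : ℝ → E} (hf : Differentiable ℝ f) (hf' : Differentiable ℝ (deriv f))
    (hf'' : Differentiable ℝ (deriv (deriv f))) {K : ℝ}
    (hK : ∀ s, ‖deriv (deriv (deriv f)) s‖ ≤ K) (s t : ℝ) (ht : 0 ≤ t) :
    ‖f (s + t) - f (s - t) - (2 * t) • deriv f s‖ ≤ 2 * K * t ^ 3 := by
  have hK0 : 0 ≤ K := (norm_nonneg _).trans (hK 0)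
  have hg : ∀ r, HasDerivAt (fun r => f (s + r) - f (s - r) - (2 * r) • deriv f s)
      (deriv f (s + r) + deriv f (s - r) - (2 : ℝ) • deriv f s) r := fun r => by
    simpa [Pi.sub_def] using (((hf (s + r)).hasDerivAt.comp_const_add s r).sub
      ((hf (s - r)).hasDerivAt.comp_const_sub s r)).sub
      (((hasDerivAt_id r).const_mul 2).smul_const (deriv f s))
  have hg' : ∀ r ∈ Icc 0 t,
      ‖deriv f (s + r) + deriv f (s - r) - (2 : ℝ) • deriv f s‖ ≤ 2 * K * t ^ 2 := fun r hr => by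
    have h1 := norm_sub_sub_smul_deriv_le hf' hf'' hK s r
    have h2 := norm_sub_sub_smul_deriv_le hf' hf'' hK s (-r)
    have hr2 : K * r ^ 2 ≤ K * t ^ 2 := by
      have := hr.1
      have := hr.2
      gcongr
    rw [← sub_eq_add_neg, neg_sq] at h2
    calc ‖deriv f (s + r) + deriv f (s - r) - (2 : ℝ) • deriv f s‖
        = ‖(deriv f (s + r) - deriv f s - r • deriv (deriv f) s)
          + (deriv f (s - r) - deriv f s - (-r) • deriv (deriv f) s)‖ := by
          congr 1; module
      _ ≤ K * r ^ 2 + K * r ^ 2 := norm_add_le_of_le h1 h2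
      _ ≤ 2 * K * t ^ 2 := by linarith
  have hbound := (convex_Icc (0 : ℝ) t).norm_image_sub_le_of_norm_hasDerivWithin_le
    (fun r _ => (hg r).hasDerivWithinAt) hg' (left_mem_Icc.mpr ht) (right_mem_Icc.mpr ht)
  simp only [add_zero, sub_zero, sub_self, mul_zero, zero_smul] at hbound
  refine hbound.trans_eq ?_
  rw [Real.norm_eq_abs, abs_of_nonneg ht]
  ring

lemma periodic_deriv {E : Type*} [NormedAddCommGroup E] [NormedSpace ℝ E] {f : ℝ → E} {c : ℝ}
    (hf : Function.Periodic f c) : Function.Periodic (deriv f) c := fun s => by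
  rw [← deriv_comp_add_const, funext hf]

lemma exists_norm_le_of_periodic {E : Type*} [NormedAddCommGroup E]
    {f : ℝ → E} (hf : Continuous f) (hper : Function.Periodic f 1) :
    ∃ K > 0, ∀ s, ‖f s‖ ≤ K := by
  obtain ⟨K, hK, hbound⟩ := (hper.isBounded_of_continuous one_ne_zero hf).exists_pos_norm_le
  exact ⟨K, hK, fun s => hbound _ (mem_range_self s)⟩

/-- second order consistency of the averaged discrete tangents:
`τ_j + τ_{j+1} = 2τ(ρ_j) + O(h²)`, where `τ_j = δx_j/|δx_j|` and `τ = x_ρ/|x_ρ|`. -/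
theorem discrete_tangent_consistency
    (x : ℝ → E2) (c₀ C₀ : ℝ) (hc₀ : 0 < c₀) (hcC : c₀ ≤ C₀)
    (hx : ContDiff ℝ 4 x)
    (hper : ∀ ρ, x (ρ + 1) = x ρ)
    (hlow : ∀ ρ, c₀ ≤ ‖deriv x ρ‖) (hup : ∀ ρ, ‖deriv x ρ‖ ≤ C₀) :
    ∃ C > (0:ℝ), ∃ hstar > (0:ℝ), ∀ J : ℕ, 0 < J → (1:ℝ)/J ≤ hstar → ∀ j : ℤ,
      ‖(‖x (j * ((1:ℝ)/J)) - x ((j-1) * ((1:ℝ)/J))‖⁻¹ •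
          (x (j * ((1:ℝ)/J)) - x ((j-1) * ((1:ℝ)/J)))
        + ‖x ((j+1) * ((1:ℝ)/J)) - x (j * ((1:ℝ)/J))‖⁻¹ •
          (x ((j+1) * ((1:ℝ)/J)) - x (j * ((1:ℝ)/J)))
        - (2:ℝ) • (‖deriv x (j * ((1:ℝ)/J))‖⁻¹ • deriv x (j * ((1:ℝ)/J))))‖
      ≤ C * ((1:ℝ)/J) ^ 2 := by
  have hx3 : ContDiff ℝ 3 (deriv x) := ContDiff.deriv' hx
  have hx2 : ContDiff ℝ 2 (deriv (deriv x)) := ContDiff.deriv' hx3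
  have hx1 : ContDiff ℝ 1 (deriv (deriv (deriv x))) := ContDiff.deriv' hx2
  have hd0 : Differentiable ℝ x := hx.differentiable (by norm_num)
  have hd1 : Differentiable ℝ (deriv x) := hx3.differentiable (by norm_num)
  have hd2 : Differentiable ℝ (deriv (deriv x)) := hx2.differentiable (by norm_num)
  have hper2 := periodic_deriv (periodic_deriv hper)
  obtain ⟨K, hK, hxK⟩ := exists_norm_le_of_periodic hx2.continuous hper2
  obtain ⟨L, hL, hxL⟩ := exists_norm_le_of_periodic hx1.continuous (periodic_deriv hper2)
  refine ⟨16 * K ^ 2 / c₀ ^ 2 + 4 * L / c₀, by positivity, c₀ / (2 * K), by positivity, ?_⟩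
  intro J hJ hJh j
  have hh : 0 < (1 : ℝ) / J := by positivity
  rw [sub_one_mul, add_one_mul]
  generalize (1 : ℝ) / J = h at *
  generalize (j : ℝ) * h = s
  have hKh : K * h ≤ c₀ / 2 := by
    rw [le_div_iff₀ (by positivity)] at hJh
    linarith
  have hfwd := norm_sub_sub_smul_deriv_le hd0 hd1 hxK s h
  have hbwd := norm_sub_sub_smul_deriv_le hd0 hd1 hxK s (-h)
  have hcen := norm_central_difference_sub_le hd0 hd1 hd2 hxL s h hh.le
  rw [← sub_eq_add_neg, neg_sq,
    show x (s - h) - x s - (-h) • deriv x s = h • deriv x s - (x s - x (s - h)) by module] at hbwd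
  rw [norm_sub_rev] at hfwd
  have hp : c₀ * h ≤ ‖h • deriv x s‖ := by
    rw [norm_smul, Real.norm_eq_abs, abs_of_pos hh, mul_comm]
    exact mul_le_mul_of_nonneg_left (hlow s) hh.le
  have hKh2 : K * h ^ 2 ≤ c₀ * h / 2 := by nlinarith
  have ha : c₀ * h / 2 ≤ ‖x s - x (s - h)‖ := by
    linarith [norm_sub_norm_le (h • deriv x s) (x s - x (s - h))]
  have hb : c₀ * h / 2 ≤ ‖x (s + h) - x s‖ := by
    linarith [norm_sub_norm_le (h • deriv x s) (x (s + h) - x s)]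
  have hch : 0 < c₀ * h := by positivity
  have hab : ‖x s - x (s - h) - (x (s + h) - x s)‖ ≤ 2 * K * h ^ 2 := by
    rw [← sub_sub_sub_cancel_left _ _ (h • deriv x s), two_mul, add_mul]
    exact (norm_sub_le _ _).trans (add_le_add hfwd hbwd)
  have hsum : ‖x s - x (s - h) + (x (s + h) - x s) - (2 : ℝ) • (h • deriv x s)‖
      ≤ 2 * L * h ^ 3 := by
    rwa [show x s - x (s - h) + (x (s + h) - x s) - (2 : ℝ) • (h • deriv x s)
      = x (s + h) - x (s - h) - (2 * h) • deriv x s by module]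
  have hnorm : ‖deriv x s‖⁻¹ • deriv x s = ‖h • deriv x s‖⁻¹ • (h • deriv x s) := by
    rw [norm_smul, Real.norm_eq_abs, abs_of_pos hh, smul_smul]
    congr 1
    field_simp
  rw [hnorm]
  refine (norm_normalize_add_normalize_sub_le _ _ _ (norm_pos_iff.mp (by linarith))
    (norm_pos_iff.mp (by linarith)) (norm_pos_iff.mp (by linarith))).trans ?_
  calc _ ≤ (2 * K * h ^ 2) ^ 2 / (c₀ * h / 2 * (c₀ * h / 2)) + 2 * (2 * L * h ^ 3) / (c₀ * h) := by
        gcongr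
    _ = (16 * K ^ 2 / c₀ ^ 2 + 4 * L / c₀) * h ^ 2 := by
        field_simp
        ring
end
end

section
/- Let x ∈ C⁴(I;ℝ²) with c₀ ≤ |x_ρ| ≤ C₀, τ = x_ρ/|x_ρ|, and τ_j = δx_j/|δx_j| on the uniform grid ρ_j = jh. Then (τ_{j+1} − τ_j)/h = τ_ρ(ρ_j) + O(h²): there exists C with |(τ_{j+1} − τ_j)/h − τ_ρ(ρ_j)| ≤ C h² for all j and small h. -/
open scoped RealInnerProductSpace
open Set

noncomputable section

open NormedSpace (normalize)

section Calculus

lemma Function.Periodic.exists_norm_le_of_continuous {E : Type*} [NormedAddCommGroup E]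
    {f : ℝ → E} {c : ℝ}
    (hp : Function.Periodic f c) (hc : c ≠ 0) (hf : Continuous f) : ∃ M, ∀ t, ‖f t‖ ≤ M := by
  obtain ⟨M, hM⟩ := (hp.compact_of_continuous hc hf).isBounded.exists_norm_le
  exact ⟨M, fun t => hM _ (mem_range_self t)⟩

variable {E : Type*} [NormedAddCommGroup E] [NormedSpace ℝ E]

lemma norm_le_mul_pow_succ_of_hasDerivAt {f f' : ℝ → E} {K r : ℝ} {n : ℕ} (hK : 0 ≤ K)
    (h0 : f 0 = 0) (hf : ∀ t, |t| ≤ r → HasDerivAt f (f' t) t)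
    (hb : ∀ t, |t| ≤ r → ‖f' t‖ ≤ K * |t| ^ n) {t : ℝ} (ht : |t| ≤ r) :
    ‖f t‖ ≤ K * |t| ^ (n + 1) := by
  have hmem : ∀ u ∈ Icc (-|t|) |t|, |u| ≤ |t| := fun u hu => abs_le.2 hu
  have key := (convex_Icc (-|t|) |t|).norm_image_sub_le_of_norm_hasDerivWithin_le
    (f := f) (f' := f') (C := K * |t| ^ n) (x := 0) (y := t)
    (fun u hu => (hf u ((hmem u hu).trans ht)).hasDerivWithinAt)
    (fun u hu => (hb u ((hmem u hu).trans ht)).trans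
      (by exact mul_le_mul_of_nonneg_left (pow_le_pow_left₀ (abs_nonneg u) (hmem u hu) n) hK))
    ⟨by simp, by simp⟩ (abs_le.1 le_rfl)
  simpa [h0, pow_succ, mul_assoc] using key

/-- Third order Taylor expansion with a remainder controlled by the fourth derivative. -/
lemma norm_taylor_three_remainder_le {x x₁ x₂ x₃ x₄ : ℝ → E} {M : ℝ}
    (h₀ : ∀ t, HasDerivAt x (x₁ t) t) (h₁ : ∀ t, HasDerivAt x₁ (x₂ t) t)
    (h₂ : ∀ t, HasDerivAt x₂ (x₃ t) t) (h₃ : ∀ t, HasDerivAt x₃ (x₄ t) t)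
    (hM : ∀ t, ‖x₄ t‖ ≤ M) (s t : ℝ) :
    ‖x (s + t) - x s - t • x₁ s - (t ^ 2 / 2) • x₂ s - (t ^ 3 / 6) • x₃ s‖ ≤ M * |t| ^ 4 := by
  have hM0 : 0 ≤ M := (norm_nonneg _).trans (hM 0)
  have id1 (v : E) (t : ℝ) : HasDerivAt (fun u : ℝ => u • v) v t := by
    simpa using (hasDerivAt_id t).smul_const v
  have id2 (v : E) (t : ℝ) : HasDerivAt (fun u : ℝ => (u ^ 2 / 2) • v) (t • v) t := by
    refine HasDerivAt.smul_const ?_ v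
    simpa using (hasDerivAt_pow 2 t).div_const 2
  have id3 (v : E) (t : ℝ) : HasDerivAt (fun u : ℝ => (u ^ 3 / 6) • v) ((t ^ 2 / 2) • v) t := by
    refine HasDerivAt.smul_const ?_ v
    convert (hasDerivAt_pow 3 t).div_const 6 using 1
    push_cast
    ring
  have e3 : ∀ t, |t| ≤ |t| → ‖x₃ (s + t) - x₃ s‖ ≤ M * |t| ^ 1 := fun t ht =>
    norm_le_mul_pow_succ_of_hasDerivAt (f := fun t => x₃ (s + t) - x₃ s) (n := 0) hM0 (by simp)
      (fun u _ => ((h₃ (s + u)).comp_const_add s u).sub_const _)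
      (fun u _ => by simpa using hM _) ht
  have e2 : ∀ t, |t| ≤ |t| → ‖x₂ (s + t) - x₂ s - t • x₃ s‖ ≤ M * |t| ^ 2 := fun t ht =>
    norm_le_mul_pow_succ_of_hasDerivAt (f := fun t => x₂ (s + t) - x₂ s - t • x₃ s) hM0 (by simp)
      (fun u _ => (((h₂ (s + u)).comp_const_add s u).sub_const _).sub (id1 _ u))
      (fun u _ => e3 u le_rfl) ht
  have e1 : ∀ t, |t| ≤ |t| → ‖x₁ (s + t) - x₁ s - t • x₂ s - (t ^ 2 / 2) • x₃ s‖ ≤ M * |t| ^ 3 :=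
    fun t ht => norm_le_mul_pow_succ_of_hasDerivAt
      (f := fun t => x₁ (s + t) - x₁ s - t • x₂ s - (t ^ 2 / 2) • x₃ s) hM0 (by simp)
      (fun u _ => ((((h₁ (s + u)).comp_const_add s u).sub_const _).sub (id1 _ u)).sub (id2 _ u))
      (fun u _ => e2 u le_rfl) ht
  exact norm_le_mul_pow_succ_of_hasDerivAt
    (f := fun t => x (s + t) - x s - t • x₁ s - (t ^ 2 / 2) • x₂ s - (t ^ 3 / 6) • x₃ s) hM0
    (by simp)
    (fun u _ => (((((h₀ (s + u)).comp_const_add s u).sub_const _).sub (id1 _ u)).sub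
      (id2 _ u)).sub (id3 _ u))
    (fun u _ => e1 u le_rfl) le_rfl

/-- The symmetric difference quotient is second order accurate. -/
lemma norm_sub_neg_sub_le {g g₁ g₂ g₃ : ℝ → E} {K r : ℝ}
    (h₀ : ∀ t, |t| ≤ r → HasDerivAt g (g₁ t) t) (h₁ : ∀ t, |t| ≤ r → HasDerivAt g₁ (g₂ t) t)
    (h₂ : ∀ t, |t| ≤ r → HasDerivAt g₂ (g₃ t) t) (hK : ∀ t, |t| ≤ r → ‖g₃ t‖ ≤ K)
    {t : ℝ} (ht : |t| ≤ r) :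
    ‖g t - g (-t) - t • (2 : ℝ) • g₁ 0‖ ≤ 2 * K * |t| ^ 3 := by
  have hK0 : 0 ≤ 2 * K := by linarith [(norm_nonneg _).trans (hK t ht)]
  have neg {f f' : ℝ → E} (h : ∀ t, |t| ≤ r → HasDerivAt f (f' t) t) (t : ℝ) (ht : |t| ≤ r) :
      HasDerivAt (fun t => f (-t)) (-f' (-t)) t := by
    simpa [Function.comp_def] using (h (-t) (by simpa using ht)).scomp t (hasDerivAt_neg t)
  have e2 : ∀ t, |t| ≤ r → ‖g₂ t - g₂ (-t)‖ ≤ 2 * K * |t| ^ 1 := fun t ht =>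
    norm_le_mul_pow_succ_of_hasDerivAt (f := fun t => g₂ t - g₂ (-t)) (n := 0) hK0 (by simp)
      (fun u hu => (h₂ u hu).sub (neg h₂ u hu))
      (fun u hu => by
        have := norm_add_le (g₃ u) (g₃ (-u))
        have := hK u hu
        have := hK (-u) (by simpa using hu)
        simp only [sub_neg_eq_add, pow_zero, mul_one]
        linarith) ht
  have e1 : ∀ t, |t| ≤ r → ‖g₁ t + g₁ (-t) - (2 : ℝ) • g₁ 0‖ ≤ 2 * K * |t| ^ 2 := fun t ht =>
    norm_le_mul_pow_succ_of_hasDerivAt (f := fun t => g₁ t + g₁ (-t) - (2 : ℝ) • g₁ 0) hK0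
      (by simp [two_smul])
      (fun u hu => ((h₁ u hu).add (neg h₁ u hu)).sub_const _)
      (fun u hu => by simpa [← sub_eq_add_neg] using e2 u hu) ht
  exact norm_le_mul_pow_succ_of_hasDerivAt
    (f := fun t => g t - g (-t) - t • (2 : ℝ) • g₁ 0) hK0 (by simp)
    (fun u hu => ((h₀ u hu).sub (neg h₀ u hu)).sub
      (by simpa using (hasDerivAt_id u).smul_const ((2 : ℝ) • g₁ 0)))
    (fun u hu => by simpa using e1 u hu) ht

/-- The directional derivative of a function smooth on an open set is smooth there and is its
derivative along lines in that direction. -/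
lemma ContDiffOn.exists_directional_deriv {F : Type*} [NormedAddCommGroup F] [NormedSpace ℝ F]
    {Φ : F → E} {U : Set F} {n : ℕ} (hU : IsOpen U) (hΦ : ContDiffOn ℝ (n + 1 : ℕ) Φ U) (v : F) :
    ∃ Ψ : F → E, ContDiffOn ℝ n Ψ U ∧
      ∀ z t, z + t • v ∈ U → HasDerivAt (fun t : ℝ => Φ (z + t • v)) (Ψ (z + t • v)) t := by
  refine ⟨fun z => fderiv ℝ Φ z v,
    (hΦ.fderiv_of_isOpen hU (by norm_cast)).clm_apply contDiffOn_const, fun z t hz => ?_⟩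
  have hd : HasFDerivAt Φ (fderiv ℝ Φ (z + t • v)) (z + t • v) :=
    ((hΦ.contDiffAt (hU.mem_nhds hz)).differentiableAt (by simp)).hasFDerivAt
  refine hd.comp_hasDerivAt t ?_
  simpa using ((hasDerivAt_id t).smul_const v).const_add z

lemma Function.Periodic.deriv {f : ℝ → E} {c : ℝ} (hp : Function.Periodic f c) :
    Function.Periodic (deriv f) c := fun t => by
  rw [← deriv_comp_add_const, funext hp]

lemma norm_normalize_le_one (u : E) : ‖normalize u‖ ≤ 1 := by
  by_cases hu : u = 0
  · simp [hu]
  · exact (NormedSpace.norm_normalize hu).le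

lemma norm_normalize_sub_normalize_le (u : E) {v : E} {c : ℝ} (hc : 0 < c) (hv : c ≤ ‖v‖) :
    ‖normalize u - normalize v‖ ≤ 2 / c * ‖u - v‖ := by
  have key : ‖v‖ • (normalize u - normalize v) = (‖v‖ - ‖u‖) • normalize u + (u - v) := by
    rw [smul_sub, sub_smul, NormedSpace.norm_smul_normalize, NormedSpace.norm_smul_normalize]
    abel
  have h := congrArg norm key
  rw [norm_smul, norm_norm] at h
  have h1 : ‖(‖v‖ - ‖u‖) • normalize u‖ ≤ ‖u - v‖ := by
    rw [norm_smul, norm_sub_rev u v]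
    exact (mul_le_of_le_one_right (norm_nonneg _) (norm_normalize_le_one u)).trans
      (abs_norm_sub_norm_le v u)
  have h2 := norm_add_le ((‖v‖ - ‖u‖) • normalize u) (u - v)
  have h3 : c * ‖normalize u - normalize v‖ ≤ ‖v‖ * ‖normalize u - normalize v‖ := by gcongr
  rw [div_mul_eq_mul_div, le_div_iff₀ hc]
  linarith

end Calculus

section Normalize

variable {E : Type*} [NormedAddCommGroup E] [InnerProductSpace ℝ E]

lemma contDiffAt_normalize {n : WithTop ℕ∞} {v : E} (hv : v ≠ 0) :
    ContDiffAt ℝ n (normalize : E → E) v :=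
  ((contDiffAt_norm ℝ hv).inv (norm_ne_zero_iff.2 hv)).smul contDiffAt_id

lemma half_le_norm_add_smul_add_smul {a b c : E} {c₀ B r t : ℝ} (ha : c₀ ≤ ‖a‖)
    (hb : ‖b‖ ≤ B) (hc : ‖c‖ ≤ B) (hr1 : r ≤ 1) (hr : r * (4 * B) ≤ c₀) (ht : |t| ≤ r) :
    c₀ / 2 ≤ ‖a + t • b + t ^ 2 • c‖ := by
  have hB : 0 ≤ B := (norm_nonneg _).trans hb
  have h1 : ‖t • b‖ ≤ r * B := by
    rw [norm_smul, Real.norm_eq_abs]; gcongr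
    exact (abs_nonneg t).trans ht
  have h2 : ‖t ^ 2 • c‖ ≤ r * B := by
    rw [norm_smul, norm_pow, Real.norm_eq_abs]
    have : |t| ^ 2 ≤ r := by nlinarith [abs_nonneg t]
    gcongr
    exact (abs_nonneg t).trans ht
  have h3 : ‖a‖ ≤ ‖a + t • b + t ^ 2 • c‖ + ‖t • b‖ + ‖t ^ 2 • c‖ := by
    calc ‖a‖ = ‖a + t • b + t ^ 2 • c - t • b - t ^ 2 • c‖ := by congr 1; abel
      _ ≤ _ := (norm_sub_le _ _).trans (by gcongr; exact norm_sub_le _ _)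
  linarith

/-- Uniform accuracy of symmetric differences of the normalization along quadratic curves whose
coefficients range over a bounded set. -/
lemma exists_norm_normalize_quadratic_sub_le [FiniteDimensional ℝ E] {c₀ B r : ℝ} (hc₀ : 0 < c₀)
    (C₀ : ℝ) (hr1 : r ≤ 1) (hr : r * (4 * B) ≤ c₀) :
    ∃ K, ∀ a b c : E, c₀ ≤ ‖a‖ → ‖a‖ ≤ C₀ → ‖b‖ ≤ B → ‖c‖ ≤ B → ∀ t : ℝ, |t| ≤ r →
      ‖normalize (a + t • b + t ^ 2 • c) - normalize (a + (-t) • b + (-t) ^ 2 • c)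
        - t • (2 : ℝ) • fderiv ℝ (normalize : E → E) a b‖ ≤ K * |t| ^ 3 := by
  let p : E × E × E × ℝ → E := fun z => z.1 + z.2.2.2 • z.2.1 + z.2.2.2 ^ 2 • z.2.2.1
  have hp : ContDiff ℝ 3 p := by fun_prop
  let U : Set (E × E × E × ℝ) := {z | p z ≠ 0}
  have hU : IsOpen U := isOpen_ne_fun hp.continuous continuous_const
  have hΦ : ContDiffOn ℝ (2 + 1 : ℕ) (fun z => normalize (p z)) U := fun z hz =>
    ((contDiffAt_normalize hz).comp z hp.contDiffAt).contDiffWithinAt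
  let v : E × E × E × ℝ := (0, 0, 0, 1)
  obtain ⟨Φ₁, hΦ₁, hd₁⟩ := hΦ.exists_directional_deriv hU v
  obtain ⟨Φ₂, hΦ₂, hd₂⟩ := ContDiffOn.exists_directional_deriv (n := 1) hU hΦ₁ v
  obtain ⟨Φ₃, hΦ₃, hd₃⟩ := ContDiffOn.exists_directional_deriv (n := 0) hU hΦ₂ v
  let S : Set (E × E × E × ℝ) := (Metric.closedBall 0 C₀ ∩ {a | c₀ ≤ ‖a‖}) ×ˢ
    Metric.closedBall 0 B ×ˢ Metric.closedBall 0 B ×ˢ Metric.closedBall 0 r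
  have hS : IsCompact S :=
    ((isCompact_closedBall _ _).inter_right (isClosed_le continuous_const continuous_norm)).prod
      ((isCompact_closedBall _ _).prod ((isCompact_closedBall _ _).prod (isCompact_closedBall _ _)))
  have hSU : S ⊆ U := by
    rintro ⟨a, b, c, t⟩ ⟨⟨-, ha⟩, hb, hc, ht⟩
    simp only [mem_closedBall_zero_iff, Real.norm_eq_abs] at hb hc ht
    exact norm_pos_iff.1 ((half_pos hc₀).trans_le
      (half_le_norm_add_smul_add_smul ha hb hc hr1 hr ht))
  obtain ⟨K, hK⟩ := hS.exists_bound_of_continuousOn (hΦ₃.continuousOn.mono hSU)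
  refine ⟨2 * K, fun a b c ha ha' hb hc t ht => ?_⟩
  let z : E × E × E × ℝ := (a, b, c, 0)
  have hz : ∀ u : ℝ, z + u • v = (a, b, c, u) := fun u => by simp [z, v]
  have hmem : ∀ u : ℝ, |u| ≤ r → z + u • v ∈ S := fun u hu => by
    rw [hz]
    exact ⟨⟨by simpa using ha', ha⟩, by simpa using hb, by simpa using hc, by simpa using hu⟩
  have h := norm_sub_neg_sub_le (fun u hu => hd₁ z u (hSU (hmem u hu)))
    (fun u hu => hd₂ z u (hSU (hmem u hu))) (fun u hu => hd₃ z u (hSU (hmem u hu)))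
    (fun u hu => hK _ (hmem u hu)) ht
  have h0 : Φ₁ (z + (0 : ℝ) • v) = fderiv ℝ (normalize : E → E) a b := by
    have hr0 : |(0 : ℝ)| ≤ r := by simpa using (abs_nonneg t).trans ht
    refine (hd₁ z 0 (hSU (hmem 0 hr0))).unique ?_
    have hN : HasFDerivAt (normalize : E → E) (fderiv ℝ normalize a) (p (z + (0 : ℝ) • v)) := by
      have : p (z + (0 : ℝ) • v) = a := by
        rw [hz]
        simp [p]
      rw [this]
      exact ((contDiffAt_normalize (n := 1) (norm_pos_iff.1 (hc₀.trans_le ha))).differentiableAt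
        (by simp)).hasFDerivAt
    refine HasFDerivAt.comp_hasDerivAt (f := fun t : ℝ => p (z + t • v)) (0 : ℝ) hN ?_
    simp only [hz, p]
    simpa using (((hasDerivAt_id (0 : ℝ)).smul_const b).const_add a).fun_add
      ((hasDerivAt_pow 2 (0 : ℝ)).smul_const c)
  rw [h0] at h
  simpa only [hz, p] using h

end Normalize

/-- second order consistency of the discrete derivative of the
tangents: `(τ_{j+1} − τ_j)/h = τ_ρ(ρ_j) + O(h²)`. -/
theorem discrete_tangent_derivative_consistency
    (x : ℝ → E2) (c₀ C₀ : ℝ) (hc₀ : 0 < c₀) (hcC : c₀ ≤ C₀)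
    (hx : ContDiff ℝ 4 x)
    (hper : ∀ ρ, x (ρ + 1) = x ρ)
    (hlow : ∀ ρ, c₀ ≤ ‖deriv x ρ‖) (hup : ∀ ρ, ‖deriv x ρ‖ ≤ C₀) :
    ∃ C > (0:ℝ), ∃ hstar > (0:ℝ), ∀ J : ℕ, 0 < J → (1:ℝ)/J ≤ hstar → ∀ j : ℤ,
      ‖(J:ℝ) • (‖x ((j+1) * ((1:ℝ)/J)) - x (j * ((1:ℝ)/J))‖⁻¹ •
            (x ((j+1) * ((1:ℝ)/J)) - x (j * ((1:ℝ)/J)))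
          - ‖x (j * ((1:ℝ)/J)) - x ((j-1) * ((1:ℝ)/J))‖⁻¹ •
            (x (j * ((1:ℝ)/J)) - x ((j-1) * ((1:ℝ)/J))))
        - deriv (fun ρ => ‖deriv x ρ‖⁻¹ • deriv x ρ) (j * ((1:ℝ)/J))‖
      ≤ C * ((1:ℝ)/J) ^ 2 := by
  have h₁ : ContDiff ℝ 3 (deriv x) := ContDiff.deriv' (n := 3) (by exact_mod_cast hx)
  have h₂ : ContDiff ℝ 2 (deriv (deriv x)) := ContDiff.deriv' (n := 2) (by exact_mod_cast h₁)
  have h₃ : ContDiff ℝ 1 (deriv (deriv (deriv x))) :=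
    ContDiff.deriv' (n := 1) (by exact_mod_cast h₂)
  have h₄ : ContDiff ℝ 0 (deriv (deriv (deriv (deriv x)))) :=
    ContDiff.deriv' (n := 0) (by exact_mod_cast h₃)
  have p₂ : Function.Periodic (deriv (deriv x)) 1 := Function.Periodic.deriv (.deriv hper)
  obtain ⟨B₂, hB₂⟩ := p₂.exists_norm_le_of_continuous one_ne_zero h₂.continuous
  obtain ⟨B₃, hB₃⟩ := p₂.deriv.exists_norm_le_of_continuous one_ne_zero h₃.continuous
  obtain ⟨M, hM⟩ := p₂.deriv.deriv.exists_norm_le_of_continuous one_ne_zero h₄.continuous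
  set x₁ := deriv x
  set x₂ := deriv x₁
  set x₃ := deriv x₂
  have d₁ : ∀ t, HasDerivAt x₁ (x₂ t) t := fun t => (h₁.differentiable (by simp) t).hasDerivAt
  have taylor := norm_taylor_three_remainder_le
    (fun t => (hx.differentiable (by simp) t).hasDerivAt) d₁
    (fun t => (h₂.differentiable (by simp) t).hasDerivAt)
    (fun t => (h₃.differentiable (by simp) t).hasDerivAt) hM
  have hM0 : 0 ≤ M := (norm_nonneg _).trans (hM 0)
  set B := max B₂ B₃
  have hB0 : 0 ≤ B := ((norm_nonneg _).trans (hB₂ 0)).trans (le_max_left _ _)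
  have hb : ∀ s, ‖(1 / 2 : ℝ) • x₂ s‖ ≤ B := fun s => by
    rw [norm_smul]
    have := (hB₂ s).trans (le_max_left B₂ B₃)
    norm_num
    linarith [norm_nonneg (x₂ s)]
  have hc : ∀ s, ‖(1 / 6 : ℝ) • x₃ s‖ ≤ B := fun s => by
    rw [norm_smul]
    have := (hB₃ s).trans (le_max_right B₂ B₃)
    norm_num
    linarith [norm_nonneg (x₃ s)]
  set r := min 1 (c₀ / (4 * B + 1))
  have hr0 : 0 < r := by positivity
  have hr1 : r ≤ 1 := min_le_left _ _
  have hr : r * (4 * B) ≤ c₀ := by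
    have : r * (4 * B + 1) ≤ c₀ := (le_div_iff₀ (by positivity)).1 (min_le_right _ _)
    linarith
  obtain ⟨K, hK⟩ := exists_norm_normalize_quadratic_sub_le (E := E2) hc₀ C₀ hr1 hr
  have hτ : ∀ s, deriv (fun ρ => ‖x₁ ρ‖⁻¹ • x₁ ρ) s
      = (2 : ℝ) • fderiv ℝ (normalize : E2 → E2) (x₁ s) ((1 / 2 : ℝ) • x₂ s) := fun s => by
    have hN : DifferentiableAt ℝ (normalize : E2 → E2) (x₁ s) :=
      (contDiffAt_normalize (n := 1) (norm_pos_iff.1 (hc₀.trans_le (hlow s)))).differentiableAt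
        (by simp)
    rw [map_smul, smul_smul]
    norm_num
    exact (hN.hasFDerivAt.comp_hasDerivAt s (d₁ s)).deriv
  -- the normalized difference quotient agrees with that of its quadratic model up to third order
  have approx : ∀ s t, |t| ≤ r → t ≠ 0 →
      ‖normalize (t⁻¹ • (x (s + t) - x s))
        - normalize (x₁ s + t • (1 / 2 : ℝ) • x₂ s + t ^ 2 • (1 / 6 : ℝ) • x₃ s)‖
      ≤ 4 / c₀ * M * |t| ^ 3 := fun s t ht ht0 => by
    refine (norm_normalize_sub_normalize_le _ (half_pos hc₀)
      (half_le_norm_add_smul_add_smul (hlow s) (hb s) (hc s) hr1 hr ht)).trans ?_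
    have e : t⁻¹ • (x (s + t) - x s)
          - (x₁ s + t • (1 / 2 : ℝ) • x₂ s + t ^ 2 • (1 / 6 : ℝ) • x₃ s)
        = t⁻¹ • (x (s + t) - x s - t • x₁ s - (t ^ 2 / 2) • x₂ s - (t ^ 3 / 6) • x₃ s) := by
      match_scalars <;> field_simp
    have h := taylor s t
    rw [e, norm_smul, norm_inv, Real.norm_eq_abs]
    have ht' : 0 < |t| := abs_pos.2 ht0
    calc 2 / (c₀ / 2) * (|t|⁻¹ * _) ≤ 2 / (c₀ / 2) * (|t|⁻¹ * (M * |t| ^ 4)) := by gcongr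
      _ = _ := by field_simp; ring
  have main : ∀ s h, 0 < h → h ≤ r →
      ‖h⁻¹ • (‖x (s + h) - x s‖⁻¹ • (x (s + h) - x s) - ‖x s - x (s - h)‖⁻¹ • (x s - x (s - h)))
        - deriv (fun ρ => ‖x₁ ρ‖⁻¹ • x₁ ρ) s‖ ≤ (8 / c₀ * M + K) * h ^ 2 := fun s h h0 hhr => by
    have habs : |h| = h := abs_of_pos h0
    have fwd : ‖x (s + h) - x s‖⁻¹ • (x (s + h) - x s)
        = normalize (h⁻¹ • (x (s + h) - x s)) :=
      (NormedSpace.normalize_smul_of_pos (inv_pos.2 h0) _).symm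
    have bwd : ‖x s - x (s - h)‖⁻¹ • (x s - x (s - h))
        = normalize ((-h)⁻¹ • (x (s + -h) - x s)) := by
      rw [inv_neg, neg_smul, ← smul_neg, neg_sub, ← sub_eq_add_neg]
      exact (NormedSpace.normalize_smul_of_pos (inv_pos.2 h0) _).symm
    have a₁ := approx s h (by rwa [habs]) h0.ne'
    have a₂ := approx s (-h) (by rwa [abs_neg, habs]) (neg_ne_zero.2 h0.ne')
    have a₃ := hK (x₁ s) _ _ (hlow s) (hup s) (hb s) (hc s) h (by rwa [habs])
    rw [abs_neg, habs] at a₂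
    rw [habs] at a₁ a₃
    rw [fwd, bwd, hτ]
    set P := normalize (h⁻¹ • (x (s + h) - x s))
    set Q := normalize ((-h)⁻¹ • (x (s + -h) - x s))
    set P' := normalize (x₁ s + h • (1 / 2 : ℝ) • x₂ s + h ^ 2 • (1 / 6 : ℝ) • x₃ s)
    set Q' := normalize (x₁ s + (-h) • (1 / 2 : ℝ) • x₂ s + (-h) ^ 2 • (1 / 6 : ℝ) • x₃ s)
    set D := (2 : ℝ) • fderiv ℝ (normalize : E2 → E2) (x₁ s) ((1 / 2 : ℝ) • x₂ s)
    have e : h⁻¹ • (P - Q) - D = h⁻¹ • ((P - P') - (Q - Q') + (P' - Q' - h • D)) := by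
      rw [smul_add, smul_sub h⁻¹ _ (h • D), inv_smul_smul₀ h0.ne']
      module
    rw [e, norm_smul, norm_inv, Real.norm_eq_abs, habs, inv_mul_le_iff₀ h0]
    calc ‖(P - P') - (Q - Q') + (P' - Q' - h • D)‖
        ≤ ‖P - P'‖ + ‖Q - Q'‖ + ‖P' - Q' - h • D‖ :=
          (norm_add_le _ _).trans (by gcongr; exact norm_sub_le _ _)
      _ ≤ 4 / c₀ * M * h ^ 3 + 4 / c₀ * M * h ^ 3 + K * h ^ 3 := by gcongr
      _ = h * ((8 / c₀ * M + K) * h ^ 2) := by ring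
  refine ⟨8 / c₀ * M + |K| + 1, by positivity, r, hr0, fun J hJ hJr j => ?_⟩
  have hh : 0 < (1 : ℝ) / J := by positivity
  have h := main (j * ((1 : ℝ) / J)) _ hh hJr
  rw [add_one_mul, sub_one_mul]
  rw [show ((1 : ℝ) / J)⁻¹ = J by simp] at h
  refine h.trans ?_
  have := le_abs_self K
  exact mul_le_mul_of_nonneg_right (by linarith) (sq_nonneg _)
end
end
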